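/- Let Γ be a finite extensive-form game with perfect recall. A behavioral strategy profile β* is a subgame perfect equilibrium in behavioral strategies (its restriction to every subgame is a Nash equilibrium in behavioral strategies of that subgame) if and only if there exist a behavioral strategy profile β̃* and a belief system μ* such that (β*, β̃*, μ*) satisfies the subgame perfect characterization. -/

import Mathlib

open scoped Classical

noncomputable section

/-- A finite extensive-form game.  Actions are labelled by natural numbers drawn from the
finite pool `actFinset`; a history is the list of actions taken so far; players are `Fin n`
and `P h = none` means that the chance player moves after `h`.  The information sets of
player `i` are `Info i j` for `j < m i`, and `infoIdx h` is the index of the information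
set containing a nonterminal history `h` at which some player moves.  Payoffs `u i h` are
relevant on terminal histories. -/
structure EFG where
  n : ℕ
  actFinset : Finset ℕ
  H : Finset (List ℕ)
  P : List ℕ → Option (Fin n)
  fc : List ℕ → ℕ → ℝ
  m : Fin n → ℕ
  Info : Fin n → ℕ → Finset (List ℕ)
  infoIdx : List ℕ → ℕ
  u : Fin n → List ℕ → ℝ
  empty_mem : ([] : List ℕ) ∈ H
  prefixClosed : ∀ h ∈ H, ∀ h' : List ℕ, h' <+: h → h' ∈ H
  act_mem : ∀ (h : List ℕ) (a : ℕ), h ++ [a] ∈ H → a ∈ actFinset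
  fc_nonneg : ∀ h a, 0 ≤ fc h a
  fc_sum : ∀ h ∈ H, P h = none → (∃ a, h ++ [a] ∈ H) →
    ∑ a ∈ actFinset.filter (fun a => h ++ [a] ∈ H), fc h a = 1
  info_spec : ∀ (i : Fin n) (j : ℕ) (h : List ℕ), j < m i →
    (h ∈ Info i j ↔ h ∈ H ∧ P h = some i ∧ (∃ a, h ++ [a] ∈ H) ∧ infoIdx h = j)
  infoIdx_lt : ∀ (i : Fin n), ∀ h ∈ H, P h = some i → (∃ a, h ++ [a] ∈ H) → infoIdx h < m i
  info_nonempty : ∀ (i : Fin n) (j : ℕ), j < m i → (Info i j).Nonempty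
  info_actions : ∀ (i : Fin n) (j : ℕ), j < m i → ∀ h ∈ Info i j, ∀ h' ∈ Info i j,
    ∀ a : ℕ, (h ++ [a] ∈ H ↔ h' ++ [a] ∈ H)
  act_unique : ∀ (h h' : List ℕ) (a : ℕ), h ∈ H → h' ∈ H → h ++ [a] ∈ H → h' ++ [a] ∈ H →
    P h = P h' ∧ infoIdx h = infoIdx h'

namespace EFG

/-- Behavioral strategy profiles (player, information-set index, action ↦ probability). -/
abbrev Profile (G : EFG) : Type := Fin G.n → ℕ → ℕ → ℝ

/-- Belief systems (player, information-set index, history ↦ probability). -/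
abbrev Belief (G : EFG) : Type := Fin G.n → ℕ → List ℕ → ℝ

variable (G : EFG)

/-- The set `Z` of terminal histories. -/
def Zset : Finset (List ℕ) := G.H.filter fun h => ∀ a : ℕ, h ++ [a] ∉ G.H

/-- The set `A(h)` of actions available after a history. -/
def A (h : List ℕ) : Finset ℕ := G.actFinset.filter fun a => h ++ [a] ∈ G.H

/-- The common action set `A(I_i^j)` of an information set. -/
def infoA (i : Fin G.n) (j : ℕ) : Finset ℕ := (G.Info i j).sup fun h => G.A h

/-- A behavioral strategy of player `i`: a probability distribution on `A(I_i^j)` for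
each information set `I_i^j`. -/
def IsBehStrategy (i : Fin G.n) (b : ℕ → ℕ → ℝ) : Prop :=
  ∀ j < G.m i, (∀ a ∈ G.infoA i j, 0 ≤ b j a) ∧ ∑ a ∈ G.infoA i j, b j a = 1

/-- A behavioral strategy profile. -/
def IsBehProfile (β : G.Profile) : Prop := ∀ i : Fin G.n, G.IsBehStrategy i (β i)

/-- The probability of action `a` at history `h`: the chance distribution if the chance
player moves, and the mover's behavioral strategy otherwise. -/
def moveProb (β : G.Profile) (h : List ℕ) (a : ℕ) : ℝ :=
  (G.P h).elim (G.fc h a) fun i => β i (G.infoIdx h) a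

/-- Player `i`'s record `X_i` of the information sets he encounters along a history and the
actions he takes at them, accumulated starting from the prefix `pre`. -/
def recordFrom (i : Fin G.n) : List ℕ → List ℕ → List (ℕ × ℕ)
  | _, [] => []
  | pre, b :: rest =>
    (if G.P pre = some i then [(G.infoIdx pre, b)] else []) ++ recordFrom i (pre ++ [b]) rest

/-- Perfect recall. -/
def PerfectRecall : Prop :=
  ∀ (i : Fin G.n) (j : ℕ), j < G.m i →
    ∀ h ∈ G.Info i j, ∀ h' ∈ G.Info i j, G.recordFrom i [] h = G.recordFrom i [] h'

/-- Product of the move probabilities along `rest`, continuing from the prefix `pre`. -/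
def prodAlong (β : G.Profile) : List ℕ → List ℕ → ℝ
  | _, [] => 1
  | pre, b :: rest => G.moveProb β pre b * prodAlong β (pre ++ [b]) rest

/-- `ω(h|β)`: the probability that the moves along `h` are played under `β`. -/
def omega (β : G.Profile) (h : List ℕ) : ℝ := G.prodAlong β [] h

/-- `ω(I_i^j|β)`. -/
def omegaInfo (i : Fin G.n) (j : ℕ) (β : G.Profile) : ℝ := ∑ h ∈ G.Info i j, G.omega β h

/-- Product of the move probabilities along `rest` from `pre`, disregarding player `i`'s
own moves. -/
def prodAlongNot (i : Fin G.n) (β : G.Profile) : List ℕ → List ℕ → ℝ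
  | _, [] => 1
  | pre, b :: rest =>
    (if G.P pre = some i then 1 else G.moveProb β pre b) * prodAlongNot i β (pre ++ [b]) rest

/-- `S^i(h|β)`: probability of the moves along `h`, disregarding player `i`'s own moves. -/
def Sh (i : Fin G.n) (β : G.Profile) (h : List ℕ) : ℝ := G.prodAlongNot i β [] h

/-- `S^i(I_i^j|β)`. -/
def SInfo (i : Fin G.n) (j : ℕ) (β : G.Profile) : ℝ := ∑ h ∈ G.Info i j, G.Sh i β h

/-- Product of the move probabilities along `rest` from `pre`, with the factor at prefixes
lying in `I_i^j` omitted. -/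
def prodAlongSkip (i : Fin G.n) (j : ℕ) (β : G.Profile) : List ℕ → List ℕ → ℝ
  | _, [] => 1
  | pre, b :: rest =>
    (if pre ∈ G.Info i j then 1 else G.moveProb β pre b) * prodAlongSkip i j β (pre ++ [b]) rest

/-- `q ∈ M(a, I_i^j)`: `I_i^q` is a first information set of player `i` after action `a`
(every history in `I_i^q` contains `a`, with no later action of `a` lying in any action set
of player `i`). -/
def FirstAfter (i : Fin G.n) (a : ℕ) (q : ℕ) : Prop :=
  q < G.m i ∧ ∀ h ∈ G.Info i q, ∃ l₁ l₂ : List ℕ,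
    h = l₁ ++ a :: l₂ ∧ ∀ b ∈ l₂, ∀ p < G.m i, b ∉ G.infoA i p

/-- `q ∈ M(I_i^j) = ∪_{a ∈ A(I_i^j)} M(a, I_i^j)`. -/
def MInfo (i : Fin G.n) (j : ℕ) (q : ℕ) : Prop := ∃ a ∈ G.infoA i j, G.FirstAfter i a q

/-- `q ∈ Λ(a, I_i^j)`: every history in `I_i^q` contains the action `a`. -/
def LambdaSet (i : Fin G.n) (a : ℕ) (q : ℕ) : Prop :=
  q < G.m i ∧ ∀ h ∈ G.Info i q, ∃ l₁ l₂ : List ℕ, h = l₁ ++ a :: l₂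

/-- `ϱ^i_{I_i^j}(β, β̃)`: replace player `i`'s component of `β` by that of `β̃` at every
information set `I_i^q` such that some history in `I_i^q` contains an action of `A(I_i^j)`. -/
def rho (i : Fin G.n) (j : ℕ) (β βt : G.Profile) : G.Profile := fun p q =>
  if p = i ∧ ∃ h ∈ G.Info i q, ∃ b ∈ h, b ∈ G.infoA i j then βt i q else β p q

/-- A belief system: a probability distribution on each information set. -/
def IsBelief (μ : G.Belief) : Prop :=
  ∀ (i : Fin G.n) (j : ℕ), j < G.m i →
    (∀ h ∈ G.Info i j, 0 ≤ μ i j h) ∧ ∑ h ∈ G.Info i j, μ i j h = 1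

/-- A self-independent belief system for `β`:
`S^i(I_i^j|β) · μ^i_{I_i^j}(h) = S^i(h|β)`. -/
def SelfIndep (β : G.Profile) (μ : G.Belief) : Prop :=
  ∀ (i : Fin G.n) (j : ℕ), j < G.m i → ∀ h ∈ G.Info i j,
    G.SInfo i j β * μ i j h = G.Sh i β h

/-- Auxiliary for `ν`: scan `rest` from `pre` for the subhistory lying in `I_i^j`, then
weight by the belief and multiply the move probabilities of the remaining moves (the move
taken at the subhistory itself being skipped). -/
def nuAux (i : Fin G.n) (j : ℕ) (β : G.Profile) (w : List ℕ → ℝ) : List ℕ → List ℕ → ℝ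
  | _, [] => 0
  | pre, b :: rest =>
    if pre ∈ G.Info i j then w pre * G.prodAlong β (pre ++ [b]) rest
    else nuAux i j β w (pre ++ [b]) rest

/-- `ν^i_{I_i^j}(h | a, β^{-I_i^j}, μ)` (it does not involve the component of `β` at
`I_i^j`). -/
def nu (i : Fin G.n) (j : ℕ) (β : G.Profile) (μ : G.Belief) (h : List ℕ) : ℝ :=
  G.nuAux i j β (μ i j) [] h

/-- `u^i((a, β^{-I_i^j}) ∧ I_i^j)`. -/
def uWedgeAct (i : Fin G.n) (j : ℕ) (a : ℕ) (β : G.Profile) : ℝ :=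
  ∑ h ∈ G.Zset.filter (fun h => a ∈ h), G.u i h * G.prodAlongSkip i j β [] h

/-- `u^i(β ∧ I_i^j)`. -/
def uWedge (i : Fin G.n) (j : ℕ) (β : G.Profile) : ℝ :=
  ∑ h ∈ G.Zset.filter (fun h => ∃ b ∈ h, b ∈ G.infoA i j), G.u i h * G.omega β h

/-- The conditional expected payoff `u^i(a, β^{-I_i^j}, μ | I_i^j)`. -/
def uCond (i : Fin G.n) (j : ℕ) (a : ℕ) (β : G.Profile) (μ : G.Belief) : ℝ :=
  ∑ h ∈ G.Zset.filter (fun h => a ∈ h), G.u i h * G.nu i j β μ h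

/-- The expected payoff `u^i(β)`. -/
def uExp (i : Fin G.n) (β : G.Profile) : ℝ := ∑ h ∈ G.Zset, G.u i h * G.omega β h

/-- The profile obtained from `β` by replacing all of player `i`'s components by `b`. -/
def replace (β : G.Profile) (i : Fin G.n) (b : ℕ → ℕ → ℝ) : G.Profile :=
  fun p => if p = i then b else β p

/-- `β` is a Nash equilibrium in behavioral strategies. -/
def IsNash (β : G.Profile) : Prop :=
  G.IsBehProfile β ∧ ∀ (i : Fin G.n) (b : ℕ → ℕ → ℝ), G.IsBehStrategy i b →
    G.uExp i (G.replace β i b) ≤ G.uExp i β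

/-- `(β, β̃, μ)` satisfies the Nash characterization (Definition 2 of the paper). -/
def NashChar (β βt : G.Profile) (μ : G.Belief) : Prop :=
  (∀ (i : Fin G.n) (j : ℕ), j < G.m i → ∀ a' ∈ G.infoA i j, ∀ a'' ∈ G.infoA i j,
    G.uWedgeAct i j a' (G.rho i j β βt) < G.uWedgeAct i j a'' (G.rho i j β βt) →
    β i j a' = 0) ∧
  (∀ (i : Fin G.n) (j : ℕ), j < G.m i → ∀ a' ∈ G.infoA i j, ∀ a'' ∈ G.infoA i j,
    G.uCond i j a' (G.rho i j β βt) μ < G.uCond i j a'' (G.rho i j β βt) μ →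
    βt i j a' = 0) ∧
  G.IsBelief μ ∧ G.SelfIndep β μ

/-- `r` is the root of a subgame: every information set lies entirely inside or entirely
outside the set of histories extending `r`. -/
def IsSubgameRoot (r : List ℕ) : Prop :=
  r ∈ G.H ∧ ∀ (i : Fin G.n) (j : ℕ), j < G.m i →
    (∀ h ∈ G.Info i j, r <+: h) ∨ ∀ h ∈ G.Info i j, ¬ r <+: h

/-- The depth `g` of the smallest subgame containing `A(I_i^j)` (the length of the longest
subgame root preceding every history of `I_i^j`). -/
def sgDepthInfo (i : Fin G.n) (j : ℕ) : ℕ :=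
  (G.H.filter fun r => G.IsSubgameRoot r ∧ ∀ h ∈ G.Info i j, r <+: h).sup List.length

/-- The depth `q(h)` of the smallest subgame containing the last action of `h`. -/
def sgDepthHist (h : List ℕ) : ℕ :=
  (G.H.filter fun r => G.IsSubgameRoot r ∧ r <+: h.dropLast).sup List.length

/-- `C^i_{I_i^j}(h|β)`: product of move probabilities along `h` within the smallest subgame
containing `A(I_i^j)`. -/
def Ch (i : Fin G.n) (j : ℕ) (β : G.Profile) (h : List ℕ) : ℝ :=
  G.prodAlong β (h.take (G.sgDepthInfo i j)) (h.drop (G.sgDepthInfo i j))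

/-- `C^i_{I_i^j}(I_i^j|β)`. -/
def CInfo (i : Fin G.n) (j : ℕ) (β : G.Profile) : ℝ := ∑ h ∈ G.Info i j, G.Ch i j β h

/-- `u^i((a, β^{-I_i^j}) ⋄ I_i^j)`. -/
def uDiamondAct (i : Fin G.n) (j : ℕ) (a : ℕ) (β : G.Profile) : ℝ :=
  ∑ h ∈ G.Zset.filter (fun h => a ∈ h), G.u i h *
    G.prodAlongSkip i j β (h.take (G.sgDepthInfo i j)) (h.drop (G.sgDepthInfo i j))

/-- `Y^i(h|β)`: like `S^i(h|β)` but within the smallest subgame containing the last action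
of `h`. -/
def Yh (i : Fin G.n) (β : G.Profile) (h : List ℕ) : ℝ :=
  G.prodAlongNot i β (h.take (G.sgDepthHist h)) (h.drop (G.sgDepthHist h))

/-- `Y^i(I_i^j|β)`. -/
def YInfo (i : Fin G.n) (j : ℕ) (β : G.Profile) : ℝ := ∑ h ∈ G.Info i j, G.Yh i β h

/-- The belief condition `Y^i(I_i^j|β) · μ^i_{I_i^j}(h) = Y^i(h|β)`. -/
def YConsistent (β : G.Profile) (μ : G.Belief) : Prop :=
  ∀ (i : Fin G.n) (j : ℕ), j < G.m i → ∀ h ∈ G.Info i j,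
    G.YInfo i j β * μ i j h = G.Yh i β h

/-- The expected payoff of player `i` in the subgame rooted at `r` (payoffs of terminal
histories extending `r`, weighted by the move probabilities within the subgame). -/
def uExpFrom (i : Fin G.n) (β : G.Profile) (r : List ℕ) : ℝ :=
  ∑ h ∈ G.Zset.filter (fun h => r <+: h), G.u i h * G.prodAlong β r (h.drop r.length)

/-- `β` is a subgame perfect equilibrium in behavioral strategies: its restriction to every
subgame is a Nash equilibrium in behavioral strategies of that subgame. -/
def IsSubgamePerfect (β : G.Profile) : Prop :=
  G.IsBehProfile β ∧ ∀ r : List ℕ, G.IsSubgameRoot r →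
    ∀ (i : Fin G.n) (b : ℕ → ℕ → ℝ), G.IsBehStrategy i b →
      G.uExpFrom i (G.replace β i b) r ≤ G.uExpFrom i β r

/-- `(β, β̃, μ)` satisfies the subgame perfect characterization (Definition 6 of the
paper). -/
def SubgameChar (β βt : G.Profile) (μ : G.Belief) : Prop :=
  (∀ (i : Fin G.n) (j : ℕ), j < G.m i → ∀ a' ∈ G.infoA i j, ∀ a'' ∈ G.infoA i j,
    G.uDiamondAct i j a' (G.rho i j β βt) < G.uDiamondAct i j a'' (G.rho i j β βt) →
    β i j a' = 0) ∧
  (∀ (i : Fin G.n) (j : ℕ), j < G.m i → ∀ a' ∈ G.infoA i j, ∀ a'' ∈ G.infoA i j,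
    G.uCond i j a' (G.rho i j β βt) μ < G.uCond i j a'' (G.rho i j β βt) μ →
    βt i j a' = 0) ∧
  G.IsBelief μ ∧ G.YConsistent β μ

/-- `(β, μ)` is a semi-sequential equilibrium. -/
def SemiSeqEq (β : G.Profile) (μ : G.Belief) : Prop :=
  G.IsBehProfile β ∧ G.IsBelief μ ∧ G.SelfIndep β μ ∧
  ∀ (i : Fin G.n) (j : ℕ), j < G.m i → ∀ a' ∈ G.infoA i j, ∀ a'' ∈ G.infoA i j,
    G.uCond i j a' β μ < G.uCond i j a'' β μ → β i j a' = 0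

/-- `(β, μ)` is a subgame perfect semi-sequential equilibrium. -/
def SubgameSemiSeqEq (β : G.Profile) (μ : G.Belief) : Prop :=
  G.IsBehProfile β ∧ G.IsBelief μ ∧ G.YConsistent β μ ∧
  ∀ (i : Fin G.n) (j : ℕ), j < G.m i → ∀ a' ∈ G.infoA i j, ∀ a'' ∈ G.infoA i j,
    G.uCond i j a' β μ < G.uCond i j a'' β μ → β i j a' = 0

/-- `d(I_i^j)`: the number of information sets of player `i` containing a prefix of some
history of `I_i^j` (counting `I_i^j` itself). -/
def dInfo (i : Fin G.n) (j : ℕ) : ℕ :=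
  ((Finset.range (G.m i)).filter
    (fun q => ∃ h ∈ G.Info i j, ∃ p : List ℕ, p <+: h ∧ p ∈ G.Info i q)).card

end EFG

/-!
For two profiles that differ only in player `i`'s strategies `b` and `b'`, the difference of the
payoffs in a subgame telescopes into one term per information set of player `i`: the gain from
using `b` instead of `b'` there, with `b'` followed afterwards, weighted by the probabilities
with which `b` reaches the histories of that set. By perfect recall player `i`'s own moves
contribute the same factor to all of these probabilities, so the belief condition makes them
proportional to `μ`, whatever `b` is. Hence, when `b'` is player `i`'s component of `β̃`, condition
(ii) makes all terms nonpositive: `b'` is a best response to `β` in every subgame at once, and the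
component of `β` is one as well exactly when its terms all vanish, which is condition (i).
Beliefs and profiles satisfying (ii) and (iii) exist for every `β`, by normalization and by
backward induction on the information sets of each player.
-/

/-! ### Distributions supported on maximizers -/

section SupportedOnArgmax

variable {ι R : Type*} [CommRing R] [LinearOrder R] {s : Finset ι} {f g p q : ι → R}

/-- The restriction of `p` to `s` is a probability distribution on `s`; the components of
behavioral strategies and belief systems are of this kind. -/
def IsDistributionOn (s : Finset ι) (p : ι → R) : Prop :=
  (∀ a ∈ s, 0 ≤ p a) ∧ ∑ a ∈ s, p a = 1

/-- `p` vanishes at every point of `s` where `f` is not maximal over `s`. This is the shape of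
both optimality conditions in the characterization. -/
def SupportedOnArgmax (s : Finset ι) (f p : ι → R) : Prop :=
  ∀ a ∈ s, ∀ a' ∈ s, f a < f a' → p a = 0

theorem supportedOnArgmax_congr (h : ∀ a ∈ s, f a = g a) :
    SupportedOnArgmax s f p ↔ SupportedOnArgmax s g p := by
  refine forall₄_congr fun a ha a' ha' => ?_
  rw [h a ha, h a' ha']

variable [IsStrictOrderedRing R]

theorem SupportedOnArgmax.const_mul (hp : SupportedOnArgmax s f p) {c : R} (hc : 0 ≤ c) :
    SupportedOnArgmax s (fun a => c * f a) p :=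
  fun a ha a' ha' h => hp a ha a' ha' (lt_of_mul_lt_mul_left h hc)

theorem supportedOnArgmax_iff_le_sum (hp : IsDistributionOn s p) :
    SupportedOnArgmax s f p ↔ ∀ a ∈ s, f a ≤ ∑ x ∈ s, p x * f x := by
  constructor
  · intro hsupp a ha
    calc f a = ∑ x ∈ s, p x * f a := by rw [← Finset.sum_mul, hp.2, one_mul]
      _ ≤ ∑ x ∈ s, p x * f x := Finset.sum_le_sum fun x hx => by
        rcases lt_or_ge (f x) (f a) with hlt | hle
        · rw [hsupp x hx a ha hlt, zero_mul, zero_mul]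
        · exact mul_le_mul_of_nonneg_left hle (hp.1 x hx)
  · intro hle a ha a' ha' hlt
    have hgap : ∀ x ∈ s, 0 ≤ p x * (∑ y ∈ s, p y * f y - f x) := fun x hx =>
      mul_nonneg (hp.1 x hx) (sub_nonneg.2 (hle x hx))
    have hsum : ∑ x ∈ s, p x * (∑ y ∈ s, p y * f y - f x) = 0 := by
      simp only [mul_sub, Finset.sum_sub_distrib, ← Finset.sum_mul, hp.2, one_mul, sub_self]
    have hzero := (Finset.sum_eq_zero_iff_of_nonneg hgap).1 hsum a ha
    exact (mul_eq_zero.1 hzero).resolve_right (sub_pos.2 (hlt.trans_le (hle a' ha'))).ne'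

theorem SupportedOnArgmax.sum_mul_le (hsupp : SupportedOnArgmax s f p)
    (hp : IsDistributionOn s p) (hq : IsDistributionOn s q) :
    ∑ a ∈ s, q a * f a ≤ ∑ a ∈ s, p a * f a :=
  calc ∑ a ∈ s, q a * f a ≤ ∑ a ∈ s, q a * ∑ x ∈ s, p x * f x :=
        Finset.sum_le_sum fun a ha => mul_le_mul_of_nonneg_left
          ((supportedOnArgmax_iff_le_sum hp).1 hsupp a ha) (hq.1 a ha)
    _ = ∑ a ∈ s, p a * f a := by rw [← Finset.sum_mul, hq.2, one_mul]

theorem SupportedOnArgmax.sum_mul_eq_iff (hsupp : SupportedOnArgmax s f p)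
    (hp : IsDistributionOn s p) (hq : IsDistributionOn s q) :
    ∑ a ∈ s, q a * f a = ∑ a ∈ s, p a * f a ↔ SupportedOnArgmax s f q := by
  refine ⟨fun heq => ?_, fun hq' =>
    le_antisymm (hsupp.sum_mul_le hp hq) (hq'.sum_mul_le hq hp)⟩
  rw [supportedOnArgmax_iff_le_sum hq, heq]
  exact (supportedOnArgmax_iff_le_sum hp).1 hsupp

theorem exists_isDistributionOn_supportedOnArgmax (hs : s.Nonempty) (f : ι → R) :
    ∃ p : ι → R, IsDistributionOn s p ∧ SupportedOnArgmax s f p := by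
  obtain ⟨m, hm, hmax⟩ := s.exists_max_image f hs
  refine ⟨Pi.single m 1, ⟨fun a _ => ?_, ?_⟩,
    fun a _ a' ha' hlt => ?_⟩
  · exact (Pi.single_nonneg.2 zero_le_one : (0 : ι → R) ≤ Pi.single m 1) a
  · rw [Finset.sum_pi_single', if_pos hm]
  · refine Pi.single_eq_of_ne ?_ 1
    rintro rfl
    exact hlt.not_ge (hmax a' ha')

end SupportedOnArgmax

theorem exists_isDistributionOn_sum_mul_eq {ι K : Type*} [Field K] [LinearOrder K]
    [IsStrictOrderedRing K] {s : Finset ι} (hs : s.Nonempty) {w : ι → K}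
    (hw : ∀ a ∈ s, 0 ≤ w a) :
    ∃ p : ι → K, IsDistributionOn s p ∧ ∀ a ∈ s, (∑ x ∈ s, w x) * p a = w a := by
  rcases eq_or_ne (∑ x ∈ s, w x) 0 with hsum | hsum
  · obtain ⟨p, hp, -⟩ := exists_isDistributionOn_supportedOnArgmax hs w
    refine ⟨p, hp, fun a ha => ?_⟩
    rw [hsum, zero_mul, (Finset.sum_eq_zero_iff_of_nonneg hw).1 hsum a ha]
  · refine ⟨fun a => w a / ∑ x ∈ s, w x, ⟨fun a ha => ?_, ?_⟩, fun a _ => ?_⟩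
    · exact div_nonneg (hw a ha) (Finset.sum_nonneg hw)
    · rw [← Finset.sum_div, div_self hsum]
    · exact mul_div_cancel₀ _ hsum

theorem exists_forall_of_wellFounded {ι α : Type*} [Nonempty α] {r : ι → ι → Prop}
    (hr : WellFounded r) {P : ι → (ι → α) → α → Prop} (hex : ∀ x f, ∃ v, P x f v)
    (hcongr : ∀ x f g v, (∀ y, r y x → f y = g y) → P x f v → P x g v) :
    ∃ f : ι → α, ∀ x, P x f (f x) := by
  choose V hV using hex
  let below (x : ι) (rec : ∀ y, r y x → α) : ι → α :=
    fun y => if h : r y x then rec y h else Classical.arbitrary α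
  refine ⟨hr.fix fun x rec => V x (below x rec), fun x => ?_⟩
  refine hcongr x _ _ _ (fun y hy => ?_) (by rw [hr.fix_eq]; exact hV x _)
  simp only [below, dif_pos hy]

theorem exists_concat_prefix {α : Type*} {l l' : List α} (h : l <+: l') (hne : l ≠ l') :
    ∃ a, l ++ [a] <+: l' := by
  obtain ⟨_ | ⟨a, x⟩, rfl⟩ := h
  · simp at hne
  · exact ⟨a, x, by simp⟩

theorem prefix_dropLast_of_ne {α : Type*} {l l' : List α} (hl : l <+: l') (hne : l ≠ l') :
    l <+: l'.dropLast := by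
  rcases List.eq_nil_or_concat' l' with rfl | ⟨x, a, rfl⟩
  · exact hl
  · rw [List.dropLast_concat]
    exact (List.prefix_concat_iff.1 hl).resolve_left hne

namespace EFG

variable {G : EFG} {i : Fin G.n} {j : ℕ} {h z : List ℕ} {a : ℕ}

/-! ### Payoffs along the game tree -/

theorem mem_A : a ∈ G.A h ↔ h ++ [a] ∈ G.H :=
  Finset.mem_filter.trans (and_iff_right_of_imp (G.act_mem h a))

theorem Zset_subset_H : G.Zset ⊆ G.H := Finset.filter_subset _ _

theorem mem_Zset : h ∈ G.Zset ↔ h ∈ G.H ∧ G.A h = ∅ := by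
  simp only [Zset, Finset.mem_filter, Finset.eq_empty_iff_forall_notMem, mem_A]

theorem backward_induction {p : ∀ h ∈ G.H, Prop}
    (step : ∀ h hh, (∀ a (ha : a ∈ G.A h), p (h ++ [a]) (mem_A.1 ha)) → p h hh)
    (hh : h ∈ G.H) : p h hh := by
  suffices H : ∀ k h hh, G.H.sup List.length < h.length + k → p h hh from
    H (G.H.sup List.length + 1) h hh (by omega)
  intro k
  induction k with
  | zero =>
    intro h hh hlt
    exact absurd (Finset.le_sup (f := List.length) hh) (not_le.2 hlt)
  | succ k ih =>
    refine fun h hh hlt => step h hh fun a ha => ih _ (mem_A.1 ha) ?_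
    rw [List.length_append, List.length_singleton]
    omega

theorem filter_prefix_eq_union {S : Finset (List ℕ)} (hS : S ⊆ G.H) (h : List ℕ) :
    S.filter (h <+: ·) =
      S.filter (· = h) ∪ (G.A h).biUnion fun a => S.filter (h ++ [a] <+: ·) := by
  ext z
  simp only [Finset.mem_union, Finset.mem_biUnion, Finset.mem_filter]
  constructor
  · rintro ⟨hz, hhz⟩
    rcases eq_or_ne h z with rfl | hne
    · exact Or.inl ⟨hz, rfl⟩
    · obtain ⟨a, ha⟩ := exists_concat_prefix hhz hne
      exact Or.inr ⟨a, mem_A.2 (G.prefixClosed z (hS hz) _ ha), hz, ha⟩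
  · rintro (⟨hz, rfl⟩ | ⟨a, -, hz, ha⟩)
    · exact ⟨hz, List.prefix_refl _⟩
    · exact ⟨hz, (List.prefix_append h [a]).trans ha⟩

theorem sum_filter_prefix {M : Type*} [AddCommMonoid M] {S : Finset (List ℕ)} (hS : S ⊆ G.H)
    (h : List ℕ) (F : List ℕ → M) :
    ∑ z ∈ S.filter (h <+: ·), F z =
      (if h ∈ S then F h else 0) + ∑ a ∈ G.A h, ∑ z ∈ S.filter (h ++ [a] <+: ·), F z := by
  rw [filter_prefix_eq_union hS, Finset.sum_union, Finset.sum_biUnion, Finset.filter_eq',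
    apply_ite (∑ z ∈ ·, F z), Finset.sum_singleton, Finset.sum_empty]
  · refine fun a _ b _ hab => Finset.disjoint_left.2 fun z hz hz' => hab ?_
    have heq := List.prefix_of_prefix_length_le (Finset.mem_filter.1 hz).2
      (Finset.mem_filter.1 hz').2 (by simp)
    simpa using heq
  · refine Finset.disjoint_left.2 fun z hz hz' => ?_
    obtain ⟨a, -, ha⟩ := Finset.mem_biUnion.1 hz'
    have hle := (Finset.mem_filter.1 ha).2.length_le
    rw [(Finset.mem_filter.1 hz).2, List.length_append, List.length_singleton] at hle
    omega

/-- The probability under `σ` of the moves leading from `h` to its extension `z`; for `h` the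
root of the relevant subgame this is the paper's `C^i(z|σ)`. -/
def pathProb (σ : G.Profile) (h z : List ℕ) : ℝ := G.prodAlong σ h (z.drop h.length)

theorem prodAlong_append (σ : G.Profile) (h x y : List ℕ) :
    G.prodAlong σ h (x ++ y) = G.prodAlong σ h x * G.prodAlong σ (h ++ x) y := by
  induction x generalizing h with
  | nil => simp [prodAlong]
  | cons b x ih => simp [prodAlong, ih, mul_assoc]

theorem pathProb_append (σ : G.Profile) (h x : List ℕ) :
    G.pathProb σ h (h ++ x) = G.prodAlong σ h x := by
  rw [pathProb, List.drop_left]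

theorem pathProb_self (σ : G.Profile) (h : List ℕ) : G.pathProb σ h h = 1 := by
  simp [pathProb, prodAlong]

theorem pathProb_mul_pathProb (σ : G.Profile) {h₁ h₂ h₃ : List ℕ} (h₁₂ : h₁ <+: h₂)
    (h₂₃ : h₂ <+: h₃) : G.pathProb σ h₁ h₂ * G.pathProb σ h₂ h₃ = G.pathProb σ h₁ h₃ := by
  obtain ⟨x, rfl⟩ := h₁₂
  obtain ⟨y, rfl⟩ := h₂₃
  rw [pathProb_append, pathProb_append, List.append_assoc, pathProb_append, prodAlong_append]

theorem pathProb_eq_moveProb_mul (σ : G.Profile) (hz : h ++ [a] <+: z) :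
    G.pathProb σ h z = G.moveProb σ h a * G.pathProb σ (h ++ [a]) z := by
  rw [← pathProb_mul_pathProb σ (List.prefix_append h [a]) hz, pathProb_append]
  simp [prodAlong]

theorem prodAlong_congr {σ τ : G.Profile} {h x : List ℕ}
    (hmove : ∀ p c, h <+: p → p ++ [c] <+: h ++ x → G.moveProb σ p c = G.moveProb τ p c) :
    G.prodAlong σ h x = G.prodAlong τ h x := by
  induction x generalizing h with
  | nil => rfl
  | cons b x ih =>
    rw [prodAlong, prodAlong, hmove h b (List.prefix_refl h) ⟨x, by simp⟩, ih]
    exact fun p c hp hpc =>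
      hmove p c ((List.prefix_append h [b]).trans hp) (by simpa using hpc)

theorem pathProb_congr {σ τ : G.Profile} (hz : h <+: z)
    (hmove : ∀ p c, h <+: p → p ++ [c] <+: z → G.moveProb σ p c = G.moveProb τ p c) :
    G.pathProb σ h z = G.pathProb τ h z := by
  obtain ⟨x, rfl⟩ := hz
  rw [pathProb_append, pathProb_append, prodAlong_congr hmove]

theorem uExpFrom_of_mem_Zset (i : Fin G.n) (σ : G.Profile) (hh : h ∈ G.Zset) :
    G.uExpFrom i σ h = G.u i h := by
  change ∑ z ∈ G.Zset.filter (h <+: ·), G.u i z * G.pathProb σ h z = _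
  rw [sum_filter_prefix Zset_subset_H, if_pos hh, (mem_Zset.1 hh).2, pathProb_self,
    Finset.sum_empty, mul_one, add_zero]

theorem uExpFrom_eq_sum (i : Fin G.n) (σ : G.Profile) (hh : (G.A h).Nonempty) :
    G.uExpFrom i σ h = ∑ a ∈ G.A h, G.moveProb σ h a * G.uExpFrom i σ (h ++ [a]) := by
  have hterm : h ∉ G.Zset := fun hz => hh.ne_empty (mem_Zset.1 hz).2
  change ∑ z ∈ G.Zset.filter (h <+: ·), G.u i z * G.pathProb σ h z = _
  rw [sum_filter_prefix Zset_subset_H, if_neg hterm, zero_add]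
  refine Finset.sum_congr rfl fun a _ => ?_
  rw [uExpFrom, Finset.mul_sum]
  refine Finset.sum_congr rfl fun z hz => ?_
  rw [pathProb_eq_moveProb_mul σ (Finset.mem_filter.1 hz).2]
  exact mul_left_comm _ _ _

theorem uExpFrom_congr (i : Fin G.n) {σ τ : G.Profile}
    (hmove : ∀ p c, h <+: p → p ++ [c] ∈ G.H → G.moveProb σ p c = G.moveProb τ p c) :
    G.uExpFrom i σ h = G.uExpFrom i τ h := by
  refine Finset.sum_congr rfl fun z hz => congrArg (G.u i z * ·) ?_
  obtain ⟨hzZ, hhz⟩ := Finset.mem_filter.1 hz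
  exact pathProb_congr hhz fun p c hp hpc =>
    hmove p c hp (G.prefixClosed z (Zset_subset_H hzZ) _ hpc)

/-- The gain of player `i` from moving according to `σ` instead of `τ` at `h` only, with `τ`
followed afterwards. -/
def oneStepGain (i : Fin G.n) (σ τ : G.Profile) (h : List ℕ) : ℝ :=
  ∑ a ∈ G.A h, (G.moveProb σ h a - G.moveProb τ h a) * G.uExpFrom i τ (h ++ [a])

theorem uExpFrom_sub_uExpFrom (i : Fin G.n) (σ τ : G.Profile) (hh : h ∈ G.H) :
    G.uExpFrom i σ h - G.uExpFrom i τ h =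
      ∑ z ∈ G.H.filter (h <+: ·), G.pathProb σ h z * G.oneStepGain i σ τ z := by
  induction hh using backward_induction with
  | step h hh ih =>
  rw [sum_filter_prefix subset_rfl, if_pos hh, pathProb_self, one_mul]
  rcases (G.A h).eq_empty_or_nonempty with hA | hA
  · have hz : h ∈ G.Zset := mem_Zset.2 ⟨hh, hA⟩
    simp only [uExpFrom_of_mem_Zset i _ hz, oneStepGain, hA, Finset.sum_empty, sub_self, add_zero]
  · rw [uExpFrom_eq_sum i σ hA, uExpFrom_eq_sum i τ hA, oneStepGain, ← Finset.sum_sub_distrib,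
      ← Finset.sum_add_distrib]
    refine Finset.sum_congr rfl fun a ha => ?_
    have hcone : ∑ z ∈ G.H.filter (h ++ [a] <+: ·), G.pathProb σ h z * G.oneStepGain i σ τ z =
        G.moveProb σ h a * (G.uExpFrom i σ (h ++ [a]) - G.uExpFrom i τ (h ++ [a])) := by
      rw [ih a ha, Finset.mul_sum]
      refine Finset.sum_congr rfl fun z hz => ?_
      rw [pathProb_eq_moveProb_mul σ (Finset.mem_filter.1 hz).2, mul_assoc]
    rw [hcone]
    ring

theorem moveProb_of_P_eq_some (σ : G.Profile) (hP : G.P h = some i) (a : ℕ) :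
    G.moveProb σ h a = σ i (G.infoIdx h) a := by
  rw [moveProb, hP, Option.elim_some]

theorem moveProb_congr {σ τ : G.Profile}
    (hστ : ∀ k, G.P h = some k → σ k (G.infoIdx h) a = τ k (G.infoIdx h) a) :
    G.moveProb σ h a = G.moveProb τ h a := by
  rcases hP : G.P h with _ | k
  · simp only [moveProb, hP, Option.elim_none]
  · rw [moveProb_of_P_eq_some σ hP, moveProb_of_P_eq_some τ hP, hστ k hP]

/-! ### Information sets under perfect recall -/

theorem mem_Info_iff (hj : j < G.m i) :
    h ∈ G.Info i j ↔ h ∈ G.H ∧ G.P h = some i ∧ (∃ a, h ++ [a] ∈ G.H) ∧ G.infoIdx h = j :=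
  G.info_spec i j h hj

theorem mem_H_of_append_mem {x y : List ℕ} (hxy : x ++ y ∈ G.H) : x ∈ G.H :=
  G.prefixClosed _ hxy _ (List.prefix_append x y)

theorem infoIdx_lt_and_mem_Info (hP : G.P h = some i) (ha : h ++ [a] ∈ G.H) :
    G.infoIdx h < G.m i ∧ h ∈ G.Info i (G.infoIdx h) := by
  have hh := mem_H_of_append_mem ha
  have hj := G.infoIdx_lt i h hh hP ⟨a, ha⟩
  exact ⟨hj, (mem_Info_iff hj).2 ⟨hh, hP, ⟨a, ha⟩, rfl⟩⟩

theorem infoA_eq_A (hj : j < G.m i) (hh : h ∈ G.Info i j) : G.infoA i j = G.A h := by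
  ext a
  rw [infoA, Finset.mem_sup]
  refine ⟨fun ⟨g, hg, ha⟩ => ?_, fun ha => ⟨h, hh, ha⟩⟩
  rw [mem_A] at ha ⊢
  exact (G.info_actions i j hj g hg h hh a).1 ha

theorem infoA_nonempty (hj : j < G.m i) : (G.infoA i j).Nonempty := by
  obtain ⟨h, hh⟩ := G.info_nonempty i j hj
  obtain ⟨a, ha⟩ := ((mem_Info_iff hj).1 hh).2.2.1
  exact ⟨a, by rwa [infoA_eq_A hj hh, mem_A]⟩

theorem mem_Info_of_mem_infoA (hj : j < G.m i) (ha : a ∈ G.infoA i j) (hha : h ++ [a] ∈ G.H) :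
    h ∈ G.Info i j := by
  obtain ⟨g, hg⟩ := G.info_nonempty i j hj
  rw [infoA_eq_A hj hg, mem_A] at ha
  obtain ⟨hgH, hPg, -, hig⟩ := (mem_Info_iff hj).1 hg
  have hh := mem_H_of_append_mem hha
  obtain ⟨hP, hidx⟩ := G.act_unique h g a hh hgH hha ha
  exact (mem_Info_iff hj).2 ⟨hh, hP.trans hPg, ⟨a, hha⟩, hidx.trans hig⟩

theorem exists_mem_Info_concat_prefix (hj : j < G.m i) (ha : a ∈ G.infoA i j) (hz : z ∈ G.H)
    (haz : a ∈ z) : ∃ h ∈ G.Info i j, h ++ [a] <+: z := by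
  obtain ⟨h, x, rfl⟩ := List.append_of_mem haz
  have hpre : h ++ [a] <+: h ++ a :: x := ⟨x, by simp⟩
  exact ⟨h, mem_Info_of_mem_infoA hj ha (G.prefixClosed _ hz _ hpre), hpre⟩

theorem recordFrom_append (i : Fin G.n) (h x y : List ℕ) :
    G.recordFrom i h (x ++ y) = G.recordFrom i h x ++ G.recordFrom i (h ++ x) y := by
  induction x generalizing h with
  | nil => simp [recordFrom]
  | cons b x ih => simp [recordFrom, ih]

/-- The number of moves player `i` has made before reaching `I_i^j`; by perfect recall it is the
same along every history in `I_i^j`. -/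
def depth (G : EFG) (i : Fin G.n) (j : ℕ) : ℕ :=
  (G.Info i j).sup fun h => (G.recordFrom i [] h).length

theorem depth_eq (hPR : G.PerfectRecall) (hj : j < G.m i) (hh : h ∈ G.Info i j) :
    G.depth i j = (G.recordFrom i [] h).length := by
  have hconst : ∀ g ∈ G.Info i j,
      (G.recordFrom i [] g).length = (G.recordFrom i [] h).length :=
    fun g hg => congrArg List.length (hPR i j hj g hg h hh)
  rw [depth, Finset.sup_congr rfl hconst, Finset.sup_const ⟨h, hh⟩]

theorem depth_lt_depth (hPR : G.PerfectRecall) {q : ℕ} (hj : j < G.m i) (hq : q < G.m i)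
    (hh : h ∈ G.Info i j) (hz : z ∈ G.Info i q) (ha : h ++ [a] <+: z) :
    G.depth i j < G.depth i q := by
  obtain ⟨x, rfl⟩ := ha
  rw [depth_eq hPR hj hh, depth_eq hPR hq hz, recordFrom_append, recordFrom_append]
  simp [recordFrom, ((mem_Info_iff hj).1 hh).2.1]

theorem eq_of_prefix_of_mem_Info (hPR : G.PerfectRecall) (hj : j < G.m i)
    (hh : h ∈ G.Info i j) (hz : z ∈ G.Info i j) (hhz : h <+: z) : h = z := by
  by_contra hne
  obtain ⟨a, ha⟩ := exists_concat_prefix hhz hne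
  exact lt_irrefl _ (depth_lt_depth hPR hj hj hh hz ha)

theorem sum_filter_mem_infoA {M : Type*} [AddCommMonoid M] (hPR : G.PerfectRecall)
    (hj : j < G.m i) (ha : a ∈ G.infoA i j) (F : List ℕ → M) :
    ∑ z ∈ G.Zset.filter (a ∈ ·), F z =
      ∑ h ∈ G.Info i j, ∑ z ∈ G.Zset.filter (h ++ [a] <+: ·), F z := by
  rw [← Finset.sum_biUnion]
  · refine Finset.sum_congr (Finset.ext fun z => ?_) fun _ _ => rfl
    simp only [Finset.mem_filter, Finset.mem_biUnion]
    constructor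
    · rintro ⟨hz, haz⟩
      obtain ⟨h, hh, hhz⟩ := exists_mem_Info_concat_prefix hj ha (Zset_subset_H hz) haz
      exact ⟨h, hh, hz, hhz⟩
    · rintro ⟨h, -, hz, hhz⟩
      exact ⟨hz, hhz.subset (by simp)⟩
  · refine fun g hg h hh hne => Finset.disjoint_left.2 fun z hgz hhz => hne ?_
    have hg' := (List.prefix_append g [a]).trans (Finset.mem_filter.1 hgz).2
    have hh' := (List.prefix_append h [a]).trans (Finset.mem_filter.1 hhz).2
    rcases List.prefix_or_prefix_of_prefix hg' hh' with hpre | hpre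
    · exact eq_of_prefix_of_mem_Info hPR hj hg hh hpre
    · exact (eq_of_prefix_of_mem_Info hPR hj hh hg hpre).symm

/-- The payoff of player `i` from playing `a` at `I_i^j` and following `σ` afterwards, when the
histories of `I_i^j` carry the weights `w`. With `w` a belief it is the conditional expected
payoff, and with `w` the path probabilities from a subgame root it is the payoff
`u^i(· ⋄ I_i^j)`. -/
def contValue (i : Fin G.n) (j : ℕ) (w : List ℕ → ℝ) (σ : G.Profile) (a : ℕ) : ℝ :=
  ∑ h ∈ G.Info i j, w h * G.uExpFrom i σ (h ++ [a])

theorem contValue_eq_const_mul {w w' : List ℕ → ℝ} {c : ℝ}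
    (hw : ∀ h ∈ G.Info i j, w h = c * w' h) (σ : G.Profile) (a : ℕ) :
    G.contValue i j w σ a = c * G.contValue i j w' σ a := by
  rw [contValue, contValue, Finset.mul_sum]
  exact Finset.sum_congr rfl fun h hh => by rw [hw h hh, mul_assoc]

theorem contValue_congr {w w' : List ℕ → ℝ} {σ τ : G.Profile}
    (hw : ∀ h ∈ G.Info i j, w h = w' h)
    (hu : ∀ h ∈ G.Info i j, G.uExpFrom i σ (h ++ [a]) = G.uExpFrom i τ (h ++ [a])) :
    G.contValue i j w σ a = G.contValue i j w' τ a :=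
  Finset.sum_congr rfl fun h hh => by rw [hw h hh, hu h hh]

theorem nuAux_eq (hPR : G.PerfectRecall) (hj : j < G.m i) (σ : G.Profile) (w : List ℕ → ℝ)
    {r x : List ℕ} (hrx : r ++ x ∈ G.Info i j) (a : ℕ) (y : List ℕ) :
    G.nuAux i j σ w r (x ++ a :: y) = w (r ++ x) * G.prodAlong σ (r ++ x ++ [a]) y := by
  induction x generalizing r with
  | nil =>
    rw [List.append_nil] at hrx
    simp [nuAux, hrx]
  | cons b x ih =>
    have hr : r ∉ G.Info i j := fun hr => by
      simpa using eq_of_prefix_of_mem_Info hPR hj hr hrx (List.prefix_append r _)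
    rw [List.cons_append, nuAux, if_neg hr, ih (by simpa using hrx), List.append_assoc r [b] x,
      List.singleton_append]

theorem nu_eq (hPR : G.PerfectRecall) (hj : j < G.m i) (σ : G.Profile) (μ : G.Belief)
    (hh : h ∈ G.Info i j) (hz : h ++ [a] <+: z) :
    G.nu i j σ μ z = μ i j h * G.pathProb σ (h ++ [a]) z := by
  obtain ⟨y, rfl⟩ := hz
  rw [pathProb_append, nu, List.append_assoc, List.singleton_append]
  exact nuAux_eq hPR hj σ (μ i j) (r := []) hh a y

theorem uCond_eq_contValue (hPR : G.PerfectRecall) (hj : j < G.m i) (ha : a ∈ G.infoA i j)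
    (σ : G.Profile) (μ : G.Belief) :
    G.uCond i j a σ μ = G.contValue i j (μ i j) σ a := by
  rw [uCond, sum_filter_mem_infoA hPR hj ha]
  refine Finset.sum_congr rfl fun h hh => ?_
  rw [uExpFrom, Finset.mul_sum]
  refine Finset.sum_congr rfl fun z hz => ?_
  rw [nu_eq hPR hj σ μ hh (Finset.mem_filter.1 hz).2]
  exact mul_left_comm _ _ _

theorem prodAlongSkip_append (i : Fin G.n) (j : ℕ) (σ : G.Profile) (h x y : List ℕ) :
    G.prodAlongSkip i j σ h (x ++ y) =
      G.prodAlongSkip i j σ h x * G.prodAlongSkip i j σ (h ++ x) y := by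
  induction x generalizing h with
  | nil => simp [prodAlongSkip]
  | cons b x ih => simp [prodAlongSkip, ih, mul_assoc]

theorem prodAlongSkip_eq_prodAlong (σ : G.Profile) {h x : List ℕ}
    (hout : ∀ p c, h <+: p → p ++ [c] <+: h ++ x → p ∉ G.Info i j) :
    G.prodAlongSkip i j σ h x = G.prodAlong σ h x := by
  induction x generalizing h with
  | nil => rfl
  | cons b x ih =>
    rw [prodAlongSkip, prodAlong, if_neg (hout h b (List.prefix_refl h) ⟨x, by simp⟩), ih]
    exact fun p c hp hpc =>
      hout p c ((List.prefix_append h [b]).trans hp) (by simpa using hpc)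

theorem prodAlongSkip_eq_pathProb_mul (hPR : G.PerfectRecall) (hj : j < G.m i) (σ : G.Profile)
    {r : List ℕ} (hh : h ∈ G.Info i j) (hr : r <+: h) (hz : h ++ [a] <+: z) :
    G.prodAlongSkip i j σ r (z.drop r.length) =
      G.pathProb σ r h * G.pathProb σ (h ++ [a]) z := by
  have hbefore : ∀ p c, r <+: p → p ++ [c] <+: h → p ∉ G.Info i j := fun p c _ hpc hp =>
    lt_irrefl _ (depth_lt_depth hPR hj hj hp hh hpc)
  have hafter : ∀ p c, h ++ [a] <+: p → p ++ [c] <+: z → p ∉ G.Info i j :=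
    fun p _ hap _ hp => lt_irrefl _ (depth_lt_depth hPR hj hj hh hp hap)
  obtain ⟨x, rfl⟩ := hr
  obtain ⟨y, rfl⟩ := hz
  have hskip : G.prodAlongSkip i j σ (r ++ x) [a] = 1 := by simp [prodAlongSkip, hh]
  rw [pathProb_append, pathProb_append, List.append_assoc, List.append_assoc, List.drop_left,
    prodAlongSkip_append, prodAlongSkip_append, hskip, one_mul,
    prodAlongSkip_eq_prodAlong σ hbefore, prodAlongSkip_eq_prodAlong σ hafter]

theorem uDiamondAct_eq_contValue (hPR : G.PerfectRecall) (hj : j < G.m i)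
    (ha : a ∈ G.infoA i j) (σ : G.Profile) {r : List ℕ} (hr : ∀ h ∈ G.Info i j, r <+: h)
    (hlen : r.length = G.sgDepthInfo i j) :
    G.uDiamondAct i j a σ = G.contValue i j (G.pathProb σ r) σ a := by
  rw [uDiamondAct, sum_filter_mem_infoA hPR hj ha]
  refine Finset.sum_congr rfl fun h hh => ?_
  rw [uExpFrom, Finset.mul_sum]
  refine Finset.sum_congr rfl fun z hz => ?_
  have haz := (Finset.mem_filter.1 hz).2
  have hrz : r <+: z := (hr h hh).trans ((List.prefix_append h [a]).trans haz)
  rw [← hlen, ← List.prefix_iff_eq_take.1 hrz,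
    prodAlongSkip_eq_pathProb_mul hPR hj σ hh (hr h hh) haz]
  exact mul_left_comm _ _ _

theorem moveProb_rho_of_mem (β βt : G.Profile) {p : List ℕ} {c : ℕ} (ha : a ∈ G.infoA i j)
    (hap : a ∈ p) (hpc : p ++ [c] ∈ G.H) :
    G.moveProb (G.rho i j β βt) p c = G.moveProb (G.replace β i (βt i)) p c := by
  refine moveProb_congr fun k hP => congrFun ?_ c
  by_cases hk : k = i
  · subst hk
    have hmem := (infoIdx_lt_and_mem_Info hP hpc).2
    rw [rho, if_pos ⟨rfl, p, hmem, a, hap, ha⟩, replace, if_pos rfl]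
  · simp only [rho, replace, hk, false_and, if_false]

theorem moveProb_rho_of_concat_prefix (hPR : G.PerfectRecall) (hj : j < G.m i)
    (β βt : G.Profile) {p : List ℕ} {c : ℕ} (hh : h ∈ G.Info i j) (hpc : p ++ [c] <+: h) :
    G.moveProb (G.rho i j β βt) p c = G.moveProb β p c := by
  refine moveProb_congr fun k hP => congrFun (if_neg ?_) c
  rintro ⟨rfl, g, hg, a, hag, ha⟩
  obtain ⟨hq, hp⟩ :=
    infoIdx_lt_and_mem_Info hP (G.prefixClosed h ((mem_Info_iff hj).1 hh).1 _ hpc)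
  obtain ⟨g', hg', hag'⟩ :=
    exists_mem_Info_concat_prefix hj ha ((mem_Info_iff hq).1 hg).1 hag
  exact lt_asymm (depth_lt_depth hPR hj hq hg' hg hag') (depth_lt_depth hPR hq hj hp hh hpc)

theorem uExpFrom_rho (β βt : G.Profile) (ha : a ∈ G.infoA i j) (h : List ℕ) :
    G.uExpFrom i (G.rho i j β βt) (h ++ [a]) =
      G.uExpFrom i (G.replace β i (βt i)) (h ++ [a]) :=
  uExpFrom_congr i fun _ _ hp hpc =>
    moveProb_rho_of_mem β βt ha (hp.subset (by simp)) hpc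

theorem uCond_rho (hPR : G.PerfectRecall) (hj : j < G.m i) (ha : a ∈ G.infoA i j)
    (β βt : G.Profile) (μ : G.Belief) :
    G.uCond i j a (G.rho i j β βt) μ =
      G.contValue i j (μ i j) (G.replace β i (βt i)) a := by
  rw [uCond_eq_contValue hPR hj ha]
  exact contValue_congr (fun _ _ => rfl) fun h _ => uExpFrom_rho β βt ha h

theorem uDiamondAct_rho (hPR : G.PerfectRecall) (hj : j < G.m i) (ha : a ∈ G.infoA i j)
    (β βt : G.Profile) {r : List ℕ} (hr : ∀ h ∈ G.Info i j, r <+: h)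
    (hlen : r.length = G.sgDepthInfo i j) :
    G.uDiamondAct i j a (G.rho i j β βt) =
      G.contValue i j (G.pathProb β r) (G.replace β i (βt i)) a := by
  rw [uDiamondAct_eq_contValue hPR hj ha _ hr hlen]
  exact contValue_congr
    (fun h hh => pathProb_congr (hr h hh) fun _ _ _ hpc =>
      moveProb_rho_of_concat_prefix hPR hj β βt hh hpc)
    fun h _ => uExpFrom_rho β βt ha h

/-! ### Bayes' rule within subgames -/

theorem isSubgameRoot_nil : G.IsSubgameRoot [] :=
  ⟨G.empty_mem, fun _ _ _ => Or.inl fun _ _ => List.nil_prefix⟩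

theorem IsSubgameRoot.forall_mem_Info {r : List ℕ} (hr : G.IsSubgameRoot r) (hj : j < G.m i)
    (hh : h ∈ G.Info i j) (hrh : r <+: h) : ∀ g ∈ G.Info i j, r <+: g :=
  (hr.2 i j hj).resolve_right fun hout => hout h hh hrh

theorem exists_longest_subgameRoot {C : List ℕ → Prop}
    [DecidablePred fun r => G.IsSubgameRoot r ∧ C r] {l : List ℕ} (hnil : C [])
    (hC : ∀ r, C r → r <+: l) :
    ∃ r, G.IsSubgameRoot r ∧ C r ∧
      r.length = (G.H.filter fun r => G.IsSubgameRoot r ∧ C r).sup List.length ∧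
      ∀ r', G.IsSubgameRoot r' → C r' → r' <+: r := by
  have hne : (G.H.filter fun r => G.IsSubgameRoot r ∧ C r).Nonempty :=
    ⟨[], Finset.mem_filter.2 ⟨G.empty_mem, isSubgameRoot_nil, hnil⟩⟩
  obtain ⟨r, hr, hsup⟩ := Finset.exists_mem_eq_sup _ hne List.length
  obtain ⟨-, hroot, hCr⟩ := Finset.mem_filter.1 hr
  refine ⟨r, hroot, hCr, hsup.symm, fun r' hroot' hCr' => ?_⟩
  refine List.prefix_of_prefix_length_le (hC r' hCr') (hC r hCr) (hsup ▸ ?_)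
  exact Finset.le_sup (f := List.length) (Finset.mem_filter.2 ⟨hroot'.1, hroot', hCr'⟩)

theorem exists_smallest_subgame (hj : j < G.m i) :
    ∃ s, G.IsSubgameRoot s ∧ (∀ h ∈ G.Info i j, s <+: h) ∧ s.length = G.sgDepthInfo i j ∧
      ∀ r, G.IsSubgameRoot r → (∀ h ∈ G.Info i j, r <+: h) → r <+: s := by
  obtain ⟨h, hh⟩ := G.info_nonempty i j hj
  exact exists_longest_subgameRoot (G := G) (C := fun r => ∀ h ∈ G.Info i j, r <+: h)
    (fun _ _ => List.nil_prefix) fun _ hr => hr h hh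

theorem IsSubgameRoot.prefix_dropLast (hPR : G.PerfectRecall) (hj : j < G.m i)
    {r g : List ℕ} (hr : G.IsSubgameRoot r) (hh : h ∈ G.Info i j) (hg : g ∈ G.Info i j)
    (hrh : r <+: h.dropLast) : r <+: g.dropLast := by
  have hprefix := hr.forall_mem_Info hj hh (hrh.trans h.dropLast_prefix)
  rcases eq_or_ne r g with rfl | hne
  · rwa [eq_of_prefix_of_mem_Info hPR hj hg hh (hprefix h hh)] at hrh ⊢
  · exact prefix_dropLast_of_ne (hprefix g hg) hne

theorem moveProb_nonneg {σ : G.Profile} (hσ : G.IsBehProfile σ) (ha : h ++ [a] ∈ G.H) :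
    0 ≤ G.moveProb σ h a := by
  rcases hP : G.P h with _ | k
  · rw [moveProb, hP, Option.elim_none]
    exact G.fc_nonneg h a
  · obtain ⟨hj, hh⟩ := infoIdx_lt_and_mem_Info hP ha
    rw [moveProb_of_P_eq_some σ hP]
    exact (hσ k _ hj).1 a (by rwa [infoA_eq_A hj hh, mem_A])

theorem prodAlong_nonneg {σ : G.Profile} (hσ : G.IsBehProfile σ) {x : List ℕ}
    (hx : h ++ x ∈ G.H) : 0 ≤ G.prodAlong σ h x := by
  induction x generalizing h with
  | nil => exact zero_le_one
  | cons b x ih =>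
    rw [List.append_cons] at hx
    exact mul_nonneg (moveProb_nonneg hσ (mem_H_of_append_mem hx)) (ih hx)

theorem pathProb_nonneg {σ : G.Profile} (hσ : G.IsBehProfile σ) (hhz : h <+: z)
    (hz : z ∈ G.H) : 0 ≤ G.pathProb σ h z := by
  obtain ⟨x, rfl⟩ := hhz
  rw [pathProb_append]
  exact prodAlong_nonneg hσ hz

theorem prodAlongNot_nonneg (i : Fin G.n) {σ : G.Profile} (hσ : G.IsBehProfile σ) {x : List ℕ}
    (hx : h ++ x ∈ G.H) : 0 ≤ G.prodAlongNot i σ h x := by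
  induction x generalizing h with
  | nil => exact zero_le_one
  | cons b x ih =>
    rw [List.append_cons] at hx
    refine mul_nonneg ?_ (ih hx)
    split_ifs
    · exact zero_le_one
    · exact moveProb_nonneg hσ (mem_H_of_append_mem hx)

theorem Yh_nonneg (i : Fin G.n) {σ : G.Profile} (hσ : G.IsBehProfile σ) (hh : h ∈ G.H) :
    0 ≤ G.Yh i σ h :=
  prodAlongNot_nonneg i hσ (by rwa [List.take_append_drop])

theorem replace_same (β : G.Profile) (i : Fin G.n) (b : ℕ → ℕ → ℝ) :
    G.replace β i b i = b :=
  if_pos rfl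

theorem replace_of_ne (β : G.Profile) {i k : Fin G.n} (hk : k ≠ i) (b : ℕ → ℕ → ℝ) :
    G.replace β i b k = β k :=
  if_neg hk

theorem replace_self (β : G.Profile) (i : Fin G.n) : G.replace β i (β i) = β := by
  funext k
  rcases eq_or_ne k i with rfl | hk
  · exact replace_same β k _
  · exact replace_of_ne β hk _

theorem IsBehProfile.replace {β : G.Profile} (hβ : G.IsBehProfile β) {b : ℕ → ℕ → ℝ}
    (hb : G.IsBehStrategy i b) : G.IsBehProfile (G.replace β i b) := by
  intro k
  rcases eq_or_ne k i with rfl | hk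
  · rwa [replace_same]
  · rw [replace_of_ne β hk]
    exact hβ k

theorem prodAlongNot_replace (β : G.Profile) (i : Fin G.n) (b : ℕ → ℕ → ℝ) (h x : List ℕ) :
    G.prodAlongNot i (G.replace β i b) h x = G.prodAlongNot i β h x := by
  induction x generalizing h with
  | nil => rfl
  | cons c x ih =>
    rw [prodAlongNot, prodAlongNot, ih]
    by_cases hP : G.P h = some i
    · rw [if_pos hP, if_pos hP]
    · have hmove : G.moveProb (G.replace β i b) h c = G.moveProb β h c :=
        moveProb_congr fun k hk => by
          rw [replace_of_ne β fun hki => hP (hk.trans (congrArg some hki))]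
      rw [hmove]

theorem prodAlong_eq_prod_mul_prodAlongNot (i : Fin G.n) (σ : G.Profile) (h x : List ℕ) :
    G.prodAlong σ h x =
      ((G.recordFrom i h x).map fun e => σ i e.1 e.2).prod * G.prodAlongNot i σ h x := by
  induction x generalizing h with
  | nil => simp [prodAlong, prodAlongNot, recordFrom]
  | cons b x ih =>
    by_cases hP : G.P h = some i
    · simp [prodAlong, prodAlongNot, recordFrom, ih, hP, moveProb_of_P_eq_some σ hP, mul_assoc]
    · simp [prodAlong, prodAlongNot, recordFrom, ih, hP, mul_left_comm]

theorem exists_pathProb_replace_eq_mul_Yh (hPR : G.PerfectRecall) (hj : j < G.m i)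
    {r : List ℕ} (hr : G.IsSubgameRoot r) (hrj : ∀ h ∈ G.Info i j, r <+: h)
    (hnot : r ∉ G.Info i j) (β : G.Profile) (b : ℕ → ℕ → ℝ) :
    ∃ c, ∀ h ∈ G.Info i j, G.pathProb (G.replace β i b) r h = c * G.Yh i β h := by
  have hdrop : ∀ h ∈ G.Info i j, r <+: h.dropLast := fun h hh =>
    prefix_dropLast_of_ne (hrj h hh) fun heq => hnot (heq ▸ hh)
  obtain ⟨g, hg⟩ := G.info_nonempty i j hj
  obtain ⟨s, hs, hsg, hlen, hmax⟩ :=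
    exists_longest_subgameRoot (C := (· <+: g.dropLast)) List.nil_prefix fun _ hr => hr
  have hrs : r <+: s := hmax r hr (hdrop g hg)
  refine ⟨G.pathProb (G.replace β i b) r s *
    ((G.recordFrom i s (g.drop s.length)).map fun e => b e.1 e.2).prod, fun h hh => ?_⟩
  have hdepth : G.sgDepthHist h = s.length := by
    rw [hlen, sgDepthHist]
    refine congrArg (Finset.sup · List.length) (Finset.filter_congr fun q _ => ?_)
    exact and_congr_right fun hq =>
      ⟨hq.prefix_dropLast hPR hj hh hg, hq.prefix_dropLast hPR hj hg hh⟩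
  have hsh : s <+: h := hs.forall_mem_Info hj hg (hsg.trans g.dropLast_prefix) h hh
  have hrecord : G.recordFrom i s (h.drop s.length) = G.recordFrom i s (g.drop s.length) := by
    obtain ⟨x, rfl⟩ := hsh
    obtain ⟨y, rfl⟩ := hsg.trans g.dropLast_prefix
    have hsame := hPR i j hj _ hh _ hg
    rw [recordFrom_append, recordFrom_append] at hsame
    rw [List.drop_left, List.drop_left]
    exact List.append_cancel_left hsame
  rw [← pathProb_mul_pathProb _ hrs hsh, pathProb, pathProb,
    prodAlong_eq_prod_mul_prodAlongNot i _ s, prodAlongNot_replace, replace_same, hrecord, Yh,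
    hdepth, ← List.prefix_iff_eq_take.1 hsh, mul_assoc]

theorem pathProb_replace_eq_sum_mul_belief (hPR : G.PerfectRecall) {β : G.Profile}
    {μ : G.Belief} (hμ : G.IsBelief μ) (hY : G.YConsistent β μ) (hj : j < G.m i)
    {r : List ℕ} (hr : G.IsSubgameRoot r) (hrj : ∀ h ∈ G.Info i j, r <+: h)
    (b : ℕ → ℕ → ℝ) (hh : h ∈ G.Info i j) :
    G.pathProb (G.replace β i b) r h =
      (∑ g ∈ G.Info i j, G.pathProb (G.replace β i b) r g) * μ i j h := by
  -- At `r ∈ I_i^j` the factors of `Y^i` come from before `r`; but then `r` is the only history.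
  by_cases hmem : r ∈ G.Info i j
  · have hsingle : G.Info i j = {r} := Finset.eq_singleton_iff_unique_mem.2
      ⟨hmem, fun g hg => (eq_of_prefix_of_mem_Info hPR hj hmem hg (hrj g hg)).symm⟩
    have hsum := (hμ i j hj).2
    rw [hsingle, Finset.sum_singleton] at hsum
    rw [hsingle, Finset.mem_singleton] at hh
    rw [hsingle, Finset.sum_singleton, hh, hsum, mul_one]
  · obtain ⟨c, hc⟩ := exists_pathProb_replace_eq_mul_Yh hPR hj hr hrj hmem β b
    rw [hc h hh, Finset.sum_congr rfl hc, ← Finset.mul_sum, mul_assoc]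
    exact congrArg (c * ·) (hY i j hj h hh).symm

theorem exists_belief {β : G.Profile} (hβ : G.IsBehProfile β) :
    ∃ μ : G.Belief, G.IsBelief μ ∧ G.YConsistent β μ := by
  have hex : ∀ i j, ∃ p, j < G.m i → IsDistributionOn (G.Info i j) p ∧
      ∀ h ∈ G.Info i j, G.YInfo i j β * p h = G.Yh i β h := by
    intro i j
    by_cases hj : j < G.m i
    · have hw : ∀ h ∈ G.Info i j, 0 ≤ G.Yh i β h := fun h hh =>
        Yh_nonneg i hβ ((mem_Info_iff hj).1 hh).1
      obtain ⟨p, hp⟩ := exists_isDistributionOn_sum_mul_eq (G.info_nonempty i j hj) hw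
      exact ⟨p, fun _ => hp⟩
    · exact ⟨0, fun hj' => absurd hj' hj⟩
  choose μ hμ using hex
  exact ⟨μ, fun i j hj => (hμ i j hj).1, fun i j hj => (hμ i j hj).2⟩

/-! ### Sequentially optimal continuations -/

theorem contValue_replace_congr (hPR : G.PerfectRecall) (hj : j < G.m i) (β : G.Profile)
    {b b' : ℕ → ℕ → ℝ} (hb : ∀ q < G.m i, G.depth i j < G.depth i q → b q = b' q)
    (w : List ℕ → ℝ) (a : ℕ) :
    G.contValue i j w (G.replace β i b) a = G.contValue i j w (G.replace β i b') a := by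
  refine contValue_congr (fun _ _ => rfl) fun h hh => uExpFrom_congr i fun p c hp hpc => ?_
  refine moveProb_congr fun k hP => ?_
  rcases eq_or_ne k i with rfl | hk
  · obtain ⟨hq, hpq⟩ := infoIdx_lt_and_mem_Info hP hpc
    rw [replace_same, replace_same, hb _ hq (depth_lt_depth hPR hj hq hh hpq hp)]
  · rw [replace_of_ne β hk, replace_of_ne β hk]

/-- The behavioral strategy `b` of player `i` is optimal at each information set `I_i^j`, given
the weights `w j` on its histories and the other players' strategies in `β`. For `w` the
beliefs of player `i` this is condition (ii) of the characterization. -/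
def SequentiallyOptimal (β : G.Profile) (i : Fin G.n) (w : ℕ → List ℕ → ℝ)
    (b : ℕ → ℕ → ℝ) : Prop :=
  ∀ j < G.m i, SupportedOnArgmax (G.infoA i j) (G.contValue i j (w j) (G.replace β i b)) (b j)

theorem exists_sequentiallyOptimal (hPR : G.PerfectRecall) (β : G.Profile) (i : Fin G.n)
    (w : ℕ → List ℕ → ℝ) :
    ∃ b, G.IsBehStrategy i b ∧ SequentiallyOptimal β i w b := by
  let OptimalAt (j : ℕ) (b : ℕ → ℕ → ℝ) (v : ℕ → ℝ) : Prop :=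
    j < G.m i → IsDistributionOn (G.infoA i j) v ∧
      SupportedOnArgmax (G.infoA i j) (G.contValue i j (w j) (G.replace β i b)) v
  have hex : ∀ j b, ∃ v, OptimalAt j b v := by
    intro j b
    by_cases hj : j < G.m i
    · obtain ⟨v, hv⟩ := exists_isDistributionOn_supportedOnArgmax (infoA_nonempty hj)
        (G.contValue i j (w j) (G.replace β i b))
      exact ⟨v, fun _ => hv⟩
    · exact ⟨0, fun hj' => absurd hj' hj⟩
  -- Continuation values involve only deeper information sets, so the recursion starts there.
  let height (j : ℕ) : ℕ := (Finset.range (G.m i)).sup (G.depth i) - G.depth i j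
  have hcongr : ∀ j b b' v, (∀ q, height q < height j → b q = b' q) →
      OptimalAt j b v → OptimalAt j b' v := by
    intro j b b' v hbb' hv hj
    refine ⟨(hv hj).1, (supportedOnArgmax_congr fun a _ => ?_).1 (hv hj).2⟩
    refine contValue_replace_congr hPR hj β (fun q hq hjq => hbb' q ?_) (w j) a
    have hle := Finset.le_sup (f := G.depth i) (Finset.mem_range.2 hq)
    exact Nat.sub_lt_sub_left (hjq.trans_le hle) hjq
  obtain ⟨b, hb⟩ := exists_forall_of_wellFounded (measure height).wf hex hcongr
  exact ⟨b, fun j hj => (hb j hj).1, fun j hj => (hb j hj).2⟩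

/-- The information sets of player `i` (by index) lying in the subgame rooted at `r`. -/
def subgameInfo (i : Fin G.n) (r : List ℕ) : Finset ℕ :=
  (Finset.range (G.m i)).filter fun j => ∀ h ∈ G.Info i j, r <+: h

theorem mem_subgameInfo {r : List ℕ} :
    j ∈ G.subgameInfo i r ↔ j < G.m i ∧ ∀ h ∈ G.Info i j, r <+: h := by
  rw [subgameInfo, Finset.mem_filter, Finset.mem_range]

theorem sum_subgame_eq_sum_subgameInfo {M : Type*} [AddCommMonoid M] {r : List ℕ}
    (hr : G.IsSubgameRoot r) {F : List ℕ → M}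
    (hF : ∀ h, (∀ j < G.m i, h ∉ G.Info i j) → F h = 0) :
    ∑ h ∈ G.H.filter (r <+: ·), F h = ∑ j ∈ G.subgameInfo i r, ∑ h ∈ G.Info i j, F h := by
  rw [← Finset.sum_biUnion]
  · refine (Finset.sum_subset (fun h hh => ?_) fun h hh hnot => hF h fun j hj hhj => ?_).symm
    · obtain ⟨j, hj, hhj⟩ := Finset.mem_biUnion.1 hh
      obtain ⟨hj, hrj⟩ := mem_subgameInfo.1 hj
      exact Finset.mem_filter.2 ⟨((mem_Info_iff hj).1 hhj).1, hrj h hhj⟩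
    · refine hnot (Finset.mem_biUnion.2 ⟨j, mem_subgameInfo.2 ⟨hj, ?_⟩, hhj⟩)
      exact hr.forall_mem_Info hj hhj (Finset.mem_filter.1 hh).2
  · refine fun j hj q hq hne => Finset.disjoint_left.2 fun h hhj hhq => hne ?_
    rw [← ((mem_Info_iff (mem_subgameInfo.1 hj).1).1 hhj).2.2.2,
      ← ((mem_Info_iff (mem_subgameInfo.1 hq).1).1 hhq).2.2.2]

theorem oneStepGain_replace_of_forall_notMem (β : G.Profile) (b b' : ℕ → ℕ → ℝ)
    (hh : ∀ j < G.m i, h ∉ G.Info i j) :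
    G.oneStepGain i (G.replace β i b) (G.replace β i b') h = 0 := by
  refine Finset.sum_eq_zero fun a ha => mul_eq_zero_of_left (sub_eq_zero.2 ?_) _
  refine moveProb_congr fun k hP => ?_
  rcases eq_or_ne k i with rfl | hk
  · obtain ⟨hj, hmem⟩ := infoIdx_lt_and_mem_Info hP (mem_A.1 ha)
    exact absurd hmem (hh _ hj)
  · rw [replace_of_ne β hk, replace_of_ne β hk]

theorem oneStepGain_replace_of_mem (β : G.Profile) (b b' : ℕ → ℕ → ℝ) (hj : j < G.m i)
    (hh : h ∈ G.Info i j) :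
    G.oneStepGain i (G.replace β i b) (G.replace β i b') h =
      ∑ a ∈ G.infoA i j, (b j a - b' j a) * G.uExpFrom i (G.replace β i b') (h ++ [a]) := by
  obtain ⟨-, hP, -, hidx⟩ := (mem_Info_iff hj).1 hh
  rw [oneStepGain, infoA_eq_A hj hh]
  simp only [moveProb_of_P_eq_some _ hP, replace_same, hidx]

theorem uExpFrom_replace_sub {r : List ℕ} (hr : G.IsSubgameRoot r) (β : G.Profile)
    (i : Fin G.n) (b b' : ℕ → ℕ → ℝ) :
    G.uExpFrom i (G.replace β i b) r - G.uExpFrom i (G.replace β i b') r =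
      ∑ j ∈ G.subgameInfo i r, (
        ∑ a ∈ G.infoA i j, b j a *
          G.contValue i j (G.pathProb (G.replace β i b) r) (G.replace β i b') a -
        ∑ a ∈ G.infoA i j, b' j a *
          G.contValue i j (G.pathProb (G.replace β i b) r) (G.replace β i b') a) := by
  rw [uExpFrom_sub_uExpFrom i _ _ hr.1, sum_subgame_eq_sum_subgameInfo hr fun h hh => by
    rw [oneStepGain_replace_of_forall_notMem β b b' hh, mul_zero]]
  refine Finset.sum_congr rfl fun j hj => ?_
  simp only [← Finset.sum_sub_distrib, ← sub_mul, contValue, Finset.mul_sum]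
  rw [Finset.sum_comm]
  refine Finset.sum_congr rfl fun h hh => ?_
  rw [oneStepGain_replace_of_mem β b b' (mem_subgameInfo.1 hj).1 hh, Finset.mul_sum]
  exact Finset.sum_congr rfl fun a _ => mul_left_comm _ _ _

theorem SequentiallyOptimal.supportedOnArgmax_pathProb (hPR : G.PerfectRecall) {β : G.Profile}
    (hβ : G.IsBehProfile β) {μ : G.Belief} (hμ : G.IsBelief μ) (hY : G.YConsistent β μ)
    {b b' : ℕ → ℕ → ℝ} (hopt : SequentiallyOptimal β i (μ i) b') (hb : G.IsBehStrategy i b)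
    {r : List ℕ} (hr : G.IsSubgameRoot r) (hj : j ∈ G.subgameInfo i r) :
    SupportedOnArgmax (G.infoA i j)
      (G.contValue i j (G.pathProb (G.replace β i b) r) (G.replace β i b')) (b' j) := by
  obtain ⟨hj, hrj⟩ := mem_subgameInfo.1 hj
  have hreach : 0 ≤ ∑ h ∈ G.Info i j, G.pathProb (G.replace β i b) r h :=
    Finset.sum_nonneg fun h hh =>
      pathProb_nonneg (hβ.replace hb) (hrj h hh) ((mem_Info_iff hj).1 hh).1
  refine (supportedOnArgmax_congr fun a _ => ?_).2 ((hopt j hj).const_mul hreach)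
  exact contValue_eq_const_mul
    (fun h hh => pathProb_replace_eq_sum_mul_belief hPR hμ hY hj hr hrj b hh) _ a

section BestResponse

variable {β : G.Profile} {μ : G.Belief} {b b' : ℕ → ℕ → ℝ} {r : List ℕ}

theorem SequentiallyOptimal.uExpFrom_replace_le (hPR : G.PerfectRecall)
    (hβ : G.IsBehProfile β) (hμ : G.IsBelief μ) (hY : G.YConsistent β μ)
    (hopt : SequentiallyOptimal β i (μ i) b') (hb' : G.IsBehStrategy i b')
    (hb : G.IsBehStrategy i b) (hr : G.IsSubgameRoot r) :
    G.uExpFrom i (G.replace β i b) r ≤ G.uExpFrom i (G.replace β i b') r := by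
  rw [← sub_nonpos, uExpFrom_replace_sub hr]
  refine Finset.sum_nonpos fun j hj => sub_nonpos.2 ?_
  have hlt := (mem_subgameInfo.1 hj).1
  exact (hopt.supportedOnArgmax_pathProb hPR hβ hμ hY hb hr hj).sum_mul_le (hb' j hlt) (hb j hlt)

theorem SequentiallyOptimal.uExpFrom_replace_eq_iff (hPR : G.PerfectRecall)
    (hβ : G.IsBehProfile β) (hμ : G.IsBelief μ) (hY : G.YConsistent β μ)
    (hopt : SequentiallyOptimal β i (μ i) b') (hb' : G.IsBehStrategy i b')
    (hb : G.IsBehStrategy i b) (hr : G.IsSubgameRoot r) :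
    G.uExpFrom i (G.replace β i b) r = G.uExpFrom i (G.replace β i b') r ↔
      ∀ j ∈ G.subgameInfo i r, SupportedOnArgmax (G.infoA i j)
        (G.contValue i j (G.pathProb (G.replace β i b) r) (G.replace β i b')) (b j) := by
  rw [← sub_eq_zero, uExpFrom_replace_sub hr, Finset.sum_eq_zero_iff_of_nonpos]
  · refine forall₂_congr fun j hj => sub_eq_zero.trans ?_
    have hlt := (mem_subgameInfo.1 hj).1
    exact (hopt.supportedOnArgmax_pathProb hPR hβ hμ hY hb hr hj).sum_mul_eq_iff
      (hb' j hlt) (hb j hlt)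
  · refine fun j hj => sub_nonpos.2 ?_
    have hlt := (mem_subgameInfo.1 hj).1
    exact (hopt.supportedOnArgmax_pathProb hPR hβ hμ hY hb hr hj).sum_mul_le
      (hb' j hlt) (hb j hlt)

theorem SequentiallyOptimal.forall_uExpFrom_replace_le_iff (hPR : G.PerfectRecall)
    (hβ : G.IsBehProfile β) (hμ : G.IsBelief μ) (hY : G.YConsistent β μ)
    (hopt : SequentiallyOptimal β i (μ i) b') (hb' : G.IsBehStrategy i b')
    (hr : G.IsSubgameRoot r) :
    (∀ b, G.IsBehStrategy i b → G.uExpFrom i (G.replace β i b) r ≤ G.uExpFrom i β r) ↔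
      ∀ j ∈ G.subgameInfo i r, SupportedOnArgmax (G.infoA i j)
        (G.contValue i j (G.pathProb β r) (G.replace β i b')) (β i j) := by
  have hle : ∀ b, G.IsBehStrategy i b →
      G.uExpFrom i (G.replace β i b) r ≤ G.uExpFrom i (G.replace β i b') r :=
    fun b hb => hopt.uExpFrom_replace_le hPR hβ hμ hY hb' hb hr
  have heq := hopt.uExpFrom_replace_eq_iff hPR hβ hμ hY hb' (hβ i) hr
  have hself := hle (β i) (hβ i)
  rw [replace_self] at heq hself
  rw [← heq]
  exact ⟨fun hbest => hself.antisymm (hbest b' hb'), fun h b hb => (hle b hb).trans_eq h.symm⟩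

end BestResponse

theorem supportedOnArgmax_uDiamondAct_iff (hPR : G.PerfectRecall) {β : G.Profile}
    (hβ : G.IsBehProfile β) (βt : G.Profile) (hj : j < G.m i) (p : ℕ → ℝ) :
    SupportedOnArgmax (G.infoA i j) (fun a => G.uDiamondAct i j a (G.rho i j β βt)) p ↔
      ∀ r, G.IsSubgameRoot r → j ∈ G.subgameInfo i r → SupportedOnArgmax (G.infoA i j)
        (G.contValue i j (G.pathProb β r) (G.replace β i (βt i))) p := by
  obtain ⟨s, hs, hsj, hlen, hmax⟩ := exists_smallest_subgame hj
  rw [supportedOnArgmax_congr fun a ha => uDiamondAct_rho hPR hj ha β βt hsj hlen]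
  refine ⟨fun hp r hr hjr => ?_, fun hp => hp s hs (mem_subgameInfo.2 ⟨hj, hsj⟩)⟩
  have hrs : r <+: s := hmax r hr (mem_subgameInfo.1 hjr).2
  refine (supportedOnArgmax_congr fun a _ => ?_).2
    (hp.const_mul (pathProb_nonneg hβ hrs hs.1))
  exact contValue_eq_const_mul
    (fun h hh => (pathProb_mul_pathProb β hrs (hsj h hh)).symm) _ a

theorem forall_sequentiallyOptimal_iff (hPR : G.PerfectRecall) (β βt : G.Profile)
    (μ : G.Belief) :
    (∀ i, SequentiallyOptimal β i (μ i) (βt i)) ↔ ∀ i, ∀ j < G.m i,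
      SupportedOnArgmax (G.infoA i j) (fun a => G.uCond i j a (G.rho i j β βt) μ) (βt i j) :=
  forall₃_congr fun _ _ hj =>
    (supportedOnArgmax_congr fun _ ha => uCond_rho hPR hj ha β βt μ).symm

theorem isSubgamePerfect_iff (hPR : G.PerfectRecall) {β βt : G.Profile} {μ : G.Belief}
    (hβ : G.IsBehProfile β) (hβt : G.IsBehProfile βt) (hμ : G.IsBelief μ)
    (hY : G.YConsistent β μ) (hopt : ∀ i, SequentiallyOptimal β i (μ i) (βt i)) :
    G.IsSubgamePerfect β ↔ ∀ i, ∀ j < G.m i, SupportedOnArgmax (G.infoA i j)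
      (fun a => G.uDiamondAct i j a (G.rho i j β βt)) (β i j) := by
  have hroot : ∀ r, G.IsSubgameRoot r → ∀ i, _ := fun r hr i =>
    (hopt i).forall_uExpFrom_replace_le_iff hPR hβ hμ hY (hβt i) hr
  constructor
  · intro hSPE i j hj
    exact (supportedOnArgmax_uDiamondAct_iff hPR hβ βt hj _).2 fun r hr hjr =>
      (hroot r hr i).1 (hSPE.2 r hr i) j hjr
  · refine fun hsupp => ⟨hβ, fun r hr i => (hroot r hr i).2 fun j hjr => ?_⟩
    have hj := (mem_subgameInfo.1 hjr).1
    exact (supportedOnArgmax_uDiamondAct_iff hPR hβ βt hj _).1 (hsupp i j hj) r hr hjr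

end EFG

/-- `β*` is a subgame perfect equilibrium in behavioral strategies iff there exist an extra
behavioral strategy profile `β̃*` and a belief system `μ*` such that `(β*, β̃*, μ*)`
satisfies the subgame perfect characterization. -/
theorem stmt9 (G : EFG) (hPR : G.PerfectRecall) (β : G.Profile) (hβ : G.IsBehProfile β) :
    G.IsSubgamePerfect β ↔
      ∃ (βt : G.Profile) (μ : G.Belief), G.IsBehProfile βt ∧ G.SubgameChar β βt μ := by
  constructor
  · intro hSPE
    obtain ⟨μ, hμ, hY⟩ := EFG.exists_belief hβ
    choose βt hβt hopt using fun i => EFG.exists_sequentiallyOptimal hPR β i (μ i)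
    exact ⟨βt, μ, hβt, (EFG.isSubgamePerfect_iff hPR hβ hβt hμ hY hopt).1 hSPE,
      (EFG.forall_sequentiallyOptimal_iff hPR β βt μ).1 hopt, hμ, hY⟩
  · rintro ⟨βt, μ, hβt, hi, hii, hμ, hY⟩
    have hopt := (EFG.forall_sequentiallyOptimal_iff hPR β βt μ).2 hii
    exact (EFG.isSubgamePerfect_iff hPR hβ hβt hμ hY hopt).2 hi
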